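/- arXiv:1308.2905 — 2 statements merged into one kernel-verified Lean document; each statement's English description precedes it below -/
import Mathlib

section
/- Fix r ∈ ℚ∩(0,1), and let r_n be the sequence of Farey mediants approaching r from below defined by r_0 a Farey neighbour of r with r_0 < r and r_n = mediant of r and r_{n-1}. Then s(r_n) = s(r)^n s(r_0) and t(r_n) = t(r) s(r)^{n-1} s(r_0) for n ≥ 1; consequently the infinite words s(r_n)^∞ converge coordinatewise to s(r)^∞ and t(r_n)^∞ converge to t(r) s(r)^∞. -/
/-- `u` is a (contiguous) factor of `w`. -/
def IsFactor (u w : List Bool) : Prop := ∃ l r : List Bool, w = l ++ u ++ r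

/-- A binary word is balanced: any two factors of equal length have numbers of
`true`s (ones) differing by at most 1. -/
def BalancedW (w : List Bool) : Prop :=
  ∀ u v : List Bool, IsFactor u w → IsFactor v w → u.length = v.length →
    (u.count true : ℤ) - (v.count true : ℤ) ≤ 1

/-- A word is cyclically balanced if all its cyclic rotations are balanced. -/
def CyclBalanced (w : List Bool) : Prop := ∀ k : ℕ, BalancedW (w.rotate k)

/-- Lexicographic `≤` on finite binary words (`false < true`). -/
def WordLe (u v : List Bool) : Prop := u = v ∨ List.Lex (· < ·) u v

/-- `w = s(p/q)`: the lexicographically largest cyclically balanced word of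
length `q` with `p` ones beginning with `0`. -/
def IsSWord (p q : ℕ) (w : List Bool) : Prop :=
  w.length = q ∧ w.count true = p ∧ CyclBalanced w ∧ w.head? = some false ∧
  ∀ w' : List Bool, w'.length = q → w'.count true = p → CyclBalanced w' →
    w'.head? = some false → WordLe w' w

/-- `w = t(p/q)`: the lexicographically smallest cyclically balanced word of
length `q` with `p` ones beginning with `1`. -/
def IsTWord (p q : ℕ) (w : List Bool) : Prop :=
  w.length = q ∧ w.count true = p ∧ CyclBalanced w ∧ w.head? = some true ∧
  ∀ w' : List Bool, w'.length = q → w'.count true = p → CyclBalanced w' →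
    w'.head? = some true → WordLe w w'

/-- The infinite periodic word `w^∞`. -/
def periodize (w : List Bool) (j : ℕ) : Bool := w.getD (j % w.length) false

/-- The infinite word `u v^∞`. -/
def wordThenPeriodic (u v : List Bool) (j : ℕ) : Bool :=
  if j < u.length then u.getD j false else periodize v (j - u.length)

/-- The number of ones among the first `i` letters of `w^∞`. -/
def prefixOnes (w : List Bool) (i : ℕ) : ℕ := ∑ j ∈ Finset.range i, (periodize w j).toNat

theorem prefixOnes_succ (w : List Bool) (i : ℕ) :
    prefixOnes w (i + 1) = prefixOnes w i + (periodize w i).toNat :=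
  Finset.sum_range_succ _ _

theorem count_true_eq_sum (u : List Bool) :
    u.count true = ∑ i ∈ Finset.range u.length, (u.getD i false).toNat := by
  induction u with
  | nil => simp
  | cons a u ih =>
    rw [List.length_cons, Finset.sum_range_succ', List.count_cons, ih]
    cases a <;> simp

theorem prefixOnes_add (w : List Bool) (a l : ℕ) :
    prefixOnes w (a + l) =
      prefixOnes w a + ∑ i ∈ Finset.range l, (periodize w (a + i)).toNat :=
  Finset.sum_range_add _ _ _

theorem prefixOnes_add_count {w u l r : List Bool} {k : ℕ} (h : w.rotate k = l ++ u ++ r) :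
    prefixOnes w (k + l.length + u.length) = prefixOnes w (k + l.length) + u.count true := by
  rw [prefixOnes_add, count_true_eq_sum]
  congr 1
  refine Finset.sum_congr rfl fun i hi => ?_
  rw [Finset.mem_range] at hi
  have hlen : w.length = l.length + u.length + r.length := by
    rw [← List.length_rotate w k, h]; simp [add_assoc]
  have hi' : l.length + i < (w.rotate k).length := by
    rw [List.length_rotate]; omega
  have hmod : (k + l.length + i) % w.length < w.length := Nat.mod_lt _ (by omega)
  have h1 : (w.rotate k)[l.length + i] = u[i] := by
    simp only [h]
    rw [List.getElem_append_left (by simp; omega), List.getElem_append_right (by simp)]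
    simp
  rw [List.getElem_rotate] at h1
  unfold periodize
  rw [List.getD_eq_getElem _ _ hmod, List.getD_eq_getElem _ _ hi, ← h1]
  congr 3
  ring

theorem prefixOnes_eq_count_take (w : List Bool) {i : ℕ} (hi : i ≤ w.length) :
    prefixOnes w i = (w.take i).count true := by
  have h := prefixOnes_add_count (w := w) (u := w.take i) (l := []) (r := w.drop i) (k := 0)
    (by simp)
  simpa [hi, prefixOnes] using h

theorem periodize_add_length (w : List Bool) (j : ℕ) :
    periodize w (j + w.length) = periodize w j := by
  simp [periodize]

theorem prefixOnes_add_length (w : List Bool) (i : ℕ) :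
    prefixOnes w (i + w.length) = prefixOnes w i + w.count true := by
  induction i with
  | zero => rw [zero_add, prefixOnes_eq_count_take w le_rfl, List.take_length]; simp [prefixOnes]
  | succ i ih =>
    rw [Nat.add_right_comm, prefixOnes_succ, ih, periodize_add_length, prefixOnes_succ]
    ring

theorem CyclBalanced.window_le_of_add_le {w : List Bool} (hw : CyclBalanced w) {a d l : ℕ}
    (h : d + l ≤ w.length) :
    ((prefixOnes w (a + l) : ℤ) - prefixOnes w a
        ≤ prefixOnes w (a + d + l) - prefixOnes w (a + d) + 1) ∧
      ((prefixOnes w (a + d + l) : ℤ) - prefixOnes w (a + d)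
        ≤ prefixOnes w (a + l) - prefixOnes w a + 1) := by
  set v := w.rotate a with hv
  have hlen : v.length = w.length := List.length_rotate _ _
  have e1 : v = [] ++ v.take l ++ v.drop l := by simp
  have e2 : v = v.take d ++ (v.drop d).take l ++ (v.drop d).drop l := by
    rw [List.append_assoc, List.take_append_drop, List.take_append_drop]
  have l1 : (v.take l).length = l := by simp; omega
  have l2 : ((v.drop d).take l).length = l := by simp; omega
  have l3 : (v.take d).length = d := by simp; omega
  have c1 := prefixOnes_add_count (w := w) (k := a) e1
  have c2 := prefixOnes_add_count (w := w) (k := a) e2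
  rw [l1] at c1
  rw [l2, l3] at c2
  simp only [List.length_nil, add_zero] at c1
  have b1 := hw a _ _ ⟨_, _, e1⟩ ⟨_, _, e2⟩ (l1.trans l2.symm)
  have b2 := hw a _ _ ⟨_, _, e2⟩ ⟨_, _, e1⟩ (l2.trans l1.symm)
  rw [c1, c2]
  push_cast
  constructor <;> linarith

theorem CyclBalanced.window_le_of_two_mul_le {w : List Bool} (hw : CyclBalanced w) {a d l : ℕ}
    (hl : 2 * l ≤ w.length) (hd : d ≤ w.length) :
    ((prefixOnes w (a + l) : ℤ) - prefixOnes w a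
        ≤ prefixOnes w (a + d + l) - prefixOnes w (a + d) + 1) ∧
      ((prefixOnes w (a + d + l) : ℤ) - prefixOnes w (a + d)
        ≤ prefixOnes w (a + l) - prefixOnes w a + 1) := by
  by_cases h : d + l ≤ w.length
  · exact hw.window_le_of_add_le h
  · have h1 := hw.window_le_of_add_le (a := a + d) (d := w.length - d) (l := l) (by omega)
    have e1 : a + d + (w.length - d) + l = a + l + w.length := by omega
    have e2 : a + d + (w.length - d) = a + w.length := by omega
    rw [e1, e2, prefixOnes_add_length, prefixOnes_add_length] at h1
    push_cast at h1
    constructor <;> linarith [h1.1, h1.2]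

theorem CyclBalanced.window_le_of_le {w : List Bool} (hw : CyclBalanced w) {a d l : ℕ}
    (hl : l ≤ w.length) (hd : d ≤ w.length) :
    ((prefixOnes w (a + l) : ℤ) - prefixOnes w a
        ≤ prefixOnes w (a + d + l) - prefixOnes w (a + d) + 1) ∧
      ((prefixOnes w (a + d + l) : ℤ) - prefixOnes w (a + d)
        ≤ prefixOnes w (a + l) - prefixOnes w a + 1) := by
  by_cases h : 2 * l ≤ w.length
  · exact hw.window_le_of_two_mul_le h hd
  · have h1 := hw.window_le_of_two_mul_le (a := a + l) (d := d) (l := w.length - l)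
      (by omega) hd
    have e1 : a + l + d + (w.length - l) = a + d + w.length := by omega
    have e2 : a + l + (w.length - l) = a + w.length := by omega
    have e3 : a + l + d = a + d + l := by omega
    rw [e1, e2, e3, prefixOnes_add_length, prefixOnes_add_length] at h1
    push_cast at h1
    constructor <;> linarith [h1.1, h1.2]

theorem sum_windows (w : List Bool) (a l : ℕ) :
    ∑ d ∈ Finset.range w.length,
      ((prefixOnes w (a + d + l) : ℤ) - prefixOnes w (a + d)) = l * w.count true := by
  induction l with
  | zero => simp
  | succ l ih =>
    have h : ∑ d ∈ Finset.range w.length,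
        ((prefixOnes w (a + l + (d + 1)) : ℤ) - prefixOnes w (a + l + d)) = w.count true := by
      rw [Finset.sum_range_sub (fun d => (prefixOnes w (a + l + d) : ℤ)),
        prefixOnes_add_length]
      simp
    push_cast
    rw [add_mul, one_mul, ← ih, ← h, ← Finset.sum_add_distrib]
    refine Finset.sum_congr rfl fun d _ => ?_
    rw [show a + l + (d + 1) = a + d + (l + 1) by ring, show a + l + d = a + d + l by ring]
    ring

/-- Windows of length `l` of a cyclically balanced word contain either the floor or the ceiling
of the average number of ones. -/
theorem CyclBalanced.window_bounds {w : List Bool} (hw : CyclBalanced w) (h0 : 0 < w.length)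
    {l : ℕ} (hl : l ≤ w.length) (a : ℕ) :
    (w.length : ℤ) * ((prefixOnes w (a + l) : ℤ) - prefixOnes w a - 1) < l * w.count true ∧
      (l : ℤ) * w.count true <
        w.length * ((prefixOnes w (a + l) : ℤ) - prefixOnes w a + 1) := by
  have hcard : ∀ c : ℤ, ∑ _d ∈ Finset.range w.length, c = w.length * c := by simp
  rw [← hcard, ← hcard, ← sum_windows w a l]
  constructor
  · refine Finset.sum_lt_sum (fun d hd => ?_) ⟨0, by simpa using h0, by simp⟩
    have := (hw.window_le_of_le (a := a) hl (Finset.mem_range.1 hd).le).1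
    linarith
  · refine Finset.sum_lt_sum (fun d hd => ?_) ⟨0, by simpa using h0, by simp⟩
    have := (hw.window_le_of_le (a := a) hl (Finset.mem_range.1 hd).le).2
    linarith

theorem WordLe.antisymm {u v : List Bool} (h1 : WordLe u v) (h2 : WordLe v u) : u = v := by
  rcases h1 with h1 | h1
  · exact h1
  rcases h2 with h2 | h2
  · exact h2.symm
  · exact absurd (show v < u from h2) (lt_asymm (show u < v from h1))

theorem wordLe_of_count_take_le {u v : List Bool} (hlen : u.length = v.length)
    (h : ∀ i, (u.take i).count true ≤ (v.take i).count true) : WordLe u v := by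
  induction u generalizing v with
  | nil => exact Or.inl (List.length_eq_zero_iff.1 hlen.symm).symm
  | cons a u ih =>
    cases v with
    | nil => simp at hlen
    | cons b v =>
      have h1 := h 1
      by_cases hab : a = b
      · subst hab
        have hlen' : u.length = v.length := by simpa using hlen
        rcases ih hlen' fun i => by
          have := h (i + 1)
          simp only [List.take_succ_cons, List.count_cons] at this
          omega with h2 | h2
        · exact Or.inl (by rw [h2])
        · exact Or.inr (List.Lex.cons h2)
      · cases a <;> cases b <;> simp at h1 hab
        exact Or.inr (List.Lex.rel (by decide))

/-- The `i`-th letter of the mechanical word of slope `p / q` and intercept `c / q`. -/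
def mechLetter (p q c i : ℕ) : Bool := decide ((c + (i + 1) * p) / q ≠ (c + i * p) / q)

/-- The mechanical word of slope `p / q` and intercept `c / q`, of length `m`. -/
def mechWord (p q c m : ℕ) : List Bool := (List.range m).map (mechLetter p q c)

@[simp] theorem length_mechWord (p q c m : ℕ) : (mechWord p q c m).length = m := by
  simp [mechWord]

theorem mechLetter_add {p q : ℕ} (c : ℕ) (hq : 0 < q) (i : ℕ) :
    mechLetter p q c (i + q) = mechLetter p q c i := by
  unfold mechLetter
  rw [show c + (i + q + 1) * p = c + (i + 1) * p + q * p by ring,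
    show c + (i + q) * p = c + i * p + q * p by ring,
    Nat.add_mul_div_left _ _ hq, Nat.add_mul_div_left _ _ hq]
  simp

theorem periodize_mechWord {p q c : ℕ} (hq : 0 < q) (j : ℕ) :
    periodize (mechWord p q c q) j = mechLetter p q c j := by
  have hper : Function.Periodic (mechLetter p q c) q := mechLetter_add c hq
  have hj : j % q < q := Nat.mod_lt _ hq
  unfold periodize
  rw [length_mechWord, List.getD_eq_getElem _ _ (by simpa using hj)]
  simp [mechWord, hper.map_mod_nat]

theorem mechLetter_toNat {p q c : ℕ} (hpq : p ≤ q) (hq : 0 < q) (i : ℕ) :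
    (c + (i + 1) * p) / q = (c + i * p) / q + (mechLetter p q c i).toNat := by
  have h1 : (c + i * p) / q ≤ (c + (i + 1) * p) / q := Nat.div_le_div_right (by nlinarith)
  have h2 : (c + (i + 1) * p) / q ≤ (c + i * p) / q + 1 := by
    rw [← Nat.add_div_right _ hq]
    exact Nat.div_le_div_right (by nlinarith)
  unfold mechLetter
  by_cases h : (c + (i + 1) * p) / q = (c + i * p) / q
  · simp [h]
  · simp [h]; omega

theorem prefixOnes_mechWord {p q c : ℕ} (hpq : p ≤ q) (hc : c < q) (i : ℕ) :
    prefixOnes (mechWord p q c q) i = (c + i * p) / q := by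
  have hq : 0 < q := by omega
  induction i with
  | zero => simp [prefixOnes, Nat.div_eq_of_lt hc]
  | succ i ih => rw [prefixOnes_succ, ih, periodize_mechWord hq, mechLetter_toNat hpq hq]

theorem count_mechWord {p q c : ℕ} (hpq : p ≤ q) (hc : c < q) :
    (mechWord p q c q).count true = p := by
  have h := prefixOnes_eq_count_take (mechWord p q c q) (length_mechWord p q c q).ge
  rw [prefixOnes_mechWord hpq hc, List.take_of_length_le (length_mechWord p q c q).le,
    Nat.add_mul_div_left _ _ (by omega), Nat.div_eq_of_lt hc, zero_add] at h
  exact h.symm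

theorem cyclBalanced_mechWord {p q c : ℕ} (hpq : p ≤ q) (hc : c < q) :
    CyclBalanced (mechWord p q c q) := by
  rintro k u v ⟨l, r, hu⟩ ⟨l', r', hv⟩ hlen
  have hq : 0 < q := by omega
  have h1 := prefixOnes_add_count hu
  have h2 := prefixOnes_add_count hv
  rw [prefixOnes_mechWord hpq hc, prefixOnes_mechWord hpq hc] at h1 h2
  rw [hlen] at h1
  generalize k + l.length = a at h1
  generalize k + l'.length = b at h2
  generalize v.length = m at h1 h2
  have a1 := Nat.lt_mul_div_succ (c + a * p) hq
  have a2 := Nat.mul_div_le (c + (a + m) * p) q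
  have b1 := Nat.lt_mul_div_succ (c + (b + m) * p) hq
  have b2 := Nat.mul_div_le (c + b * p) q
  rw [h1] at a2
  rw [h2] at b1
  generalize (c + a * p) / q = x at *
  generalize (c + b * p) / q = y at *
  have : q * List.count true u < q * (List.count true v + 2) := by nlinarith
  have := Nat.lt_of_mul_lt_mul_left this
  omega

theorem head?_mechWord {p q c : ℕ} (hc : c < q) :
    (mechWord p q c q).head? = some (decide ((c + p) / q ≠ 0)) := by
  obtain ⟨m, rfl⟩ : ∃ m, q = m + 1 := ⟨q - 1, by omega⟩
  simp [mechWord, List.range_succ_eq_map, mechLetter, Nat.div_eq_of_lt hc, -Nat.div_eq_zero_iff]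

theorem prefixOnes_one {w : List Bool} {b : Bool} (h : w.head? = some b) :
    prefixOnes w 1 = b.toNat := by
  cases w with
  | nil => simp at h
  | cons a w => simp_all [prefixOnes, periodize]

theorem wordLe_of_prefixOnes_le {u v : List Bool} (hlen : u.length = v.length)
    (h : ∀ i, i ≤ u.length → prefixOnes u i ≤ prefixOnes v i) : WordLe u v := by
  refine wordLe_of_count_take_le hlen fun i => ?_
  rcases le_total i u.length with hi | hi
  · rw [← prefixOnes_eq_count_take u hi, ← prefixOnes_eq_count_take v (hlen ▸ hi)]
    exact h i hi
  · have := h _ le_rfl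
    rw [prefixOnes_eq_count_take u le_rfl, prefixOnes_eq_count_take v hlen.le, List.take_length,
      hlen, List.take_length] at this
    rwa [List.take_of_length_le hi, List.take_of_length_le (hlen ▸ hi)]

theorem IsSWord.eq_mechWord {p q : ℕ} {w : List Bool} (hpq : p < q) (hw : IsSWord p q w) :
    w = mechWord p q (q - p - 1) q := by
  obtain ⟨hlen, hcount, hbal, hhead, hmax⟩ := hw
  have hc : q - p - 1 < q := by omega
  refine WordLe.antisymm (wordLe_of_prefixOnes_le (by simpa using hlen) fun i hi => ?_)
    (hmax _ (length_mechWord _ _ _ _) (count_mechWord hpq.le hc)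
      (cyclBalanced_mechWord hpq.le hc) ?_)
  · rw [prefixOnes_mechWord hpq.le hc]
    cases i with
    | zero => simp [prefixOnes]
    | succ l =>
      have h1 := (hbal.window_bounds (by omega) (show l ≤ w.length by omega) 1).1
      rw [prefixOnes_one hhead, hlen, hcount, add_comm 1 l] at h1
      rw [Nat.le_div_iff_mul_le (by omega),
        show q - p - 1 + (l + 1) * p = q - 1 + l * p by rw [add_mul]; omega]
      zify [show 1 ≤ q by omega]
      simp at h1
      linarith
  · rw [head?_mechWord hc, show q - p - 1 + p = q - 1 by omega,
      Nat.div_eq_of_lt (show q - 1 < q by omega)]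
    simp

theorem IsTWord.eq_mechWord {p q : ℕ} {w : List Bool} (hp : 0 < p) (hpq : p < q)
    (hw : IsTWord p q w) : w = mechWord p q (q - p) q := by
  obtain ⟨hlen, hcount, hbal, hhead, hmin⟩ := hw
  have hc : q - p < q := by omega
  refine WordLe.antisymm (hmin _ (length_mechWord _ _ _ _) (count_mechWord hpq.le hc)
      (cyclBalanced_mechWord hpq.le hc) ?_)
    (wordLe_of_prefixOnes_le (by simpa using hlen.symm) fun i hi => ?_)
  · rw [head?_mechWord hc, show q - p + p = q by omega, Nat.div_self (by omega)]
    simp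
  · rw [length_mechWord] at hi
    rw [prefixOnes_mechWord hpq.le hc]
    cases i with
    | zero => simp [prefixOnes, Nat.div_eq_of_lt hc]
    | succ l =>
      have h1 := (hbal.window_bounds (by omega) (show l ≤ w.length by omega) 1).2
      rw [prefixOnes_one hhead, hlen, hcount, add_comm 1 l] at h1
      rw [← Nat.lt_succ_iff, Nat.div_lt_iff_lt_mul (by omega),
        show q - p + (l + 1) * p = q + l * p by rw [add_mul]; omega]
      zify
      simp at h1
      linarith

theorem replicate_append_mechWord {p q : ℕ} (c : ℕ) (hq : 0 < q) (n m : ℕ) :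
    (List.replicate n (mechWord p q c q)).flatten ++ mechWord p q c m =
      mechWord p q c (n * q + m) := by
  induction n with
  | zero => simp
  | succ n ih =>
    rw [List.replicate_succ, List.flatten_cons, List.append_assoc, ih,
      show (n + 1) * q + m = q + (n * q + m) by ring]
    rw [mechWord, mechWord, mechWord, List.range_add (n := q), List.map_append, List.map_map,
      List.append_cancel_left_eq]
    refine List.map_congr_left fun i _ => ?_
    simp only [Function.comp, add_comm q, mechLetter_add c hq]

section Farey

variable {p q P Q : ℕ}

theorem div_eq_of_scaled_bounds {X h : ℕ} (h1 : (q : ℤ) * (Q * h) < q * (X + 1))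
    (h2 : (q : ℤ) * X < q * (Q * (h + 1))) : X / Q = h := by
  have hq : (0 : ℤ) ≤ q := by positivity
  have h1' := lt_of_mul_lt_mul_left h1 hq
  have h2' := lt_of_mul_lt_mul_left h2 hq
  norm_cast at h1' h2'
  exact Nat.div_eq_of_lt_le (by linarith) (by linarith)

theorem farey_lower_div_eq (hpq : p < q) (hPQ : P < Q) (hp : 0 < p)
    (hF : (p : ℤ) * Q - P * q = 1) {i : ℕ} (hi : i ≤ Q) :
    (Q - P - 1 + i * P) / Q = (q - p - 1 + i * p) / q := by
  have h1 := Nat.mul_div_le (q - p - 1 + i * p) q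
  have h2 := Nat.lt_mul_div_succ (q - p - 1 + i * p) (show 0 < q by omega)
  generalize (q - p - 1 + i * p) / q = h at h1 h2 ⊢
  have e1 : q - p - 1 + i * p + p + 1 = q + i * p := by omega
  have e2 : Q - P - 1 + i * P + P + 1 = Q + i * P := by omega
  generalize q - p - 1 + i * p = x at *
  generalize Q - P - 1 + i * P = X at *
  have h2' : x + 1 ≤ q * (h + 1) := h2
  zify at hpq hPQ hp hi h1 h2' e1 e2
  have key : (q : ℤ) * X = Q * (x + 1) + 1 - q - i := by
    linear_combination (q : ℤ) * e2 - Q * e1 - (i - 1 : ℤ) * hF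
  have m1 := mul_le_mul_of_nonneg_left h1 (show (0 : ℤ) ≤ Q by positivity)
  have m2 := mul_le_mul_of_nonneg_left h2' (show (0 : ℤ) ≤ Q by positivity)
  exact div_eq_of_scaled_bounds (q := q) (by linarith) (by linarith)

theorem farey_upper_div_eq_of_le (hpq : p < q) (hPQ : P < Q) (hqQ : q ≤ Q) (hp : 0 < p)
    (hF : (p : ℤ) * Q - P * q = 1) {i : ℕ} (hi : i ≤ q) :
    (Q - P + i * P) / Q = (q - p + i * p) / q := by
  have h1 := Nat.mul_div_le (q - p + i * p) q
  have h2 := Nat.lt_mul_div_succ (q - p + i * p) (show 0 < q by omega)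
  generalize (q - p + i * p) / q = h at h1 h2 ⊢
  have e1 : q - p + i * p + p = q + i * p := by omega
  have e2 : Q - P + i * P + P = Q + i * P := by omega
  generalize q - p + i * p = x at *
  generalize Q - P + i * P = X at *
  have h2' : x + 1 ≤ q * (h + 1) := h2
  zify at hpq hPQ hqQ hp hi h1 h2' e1 e2
  have key : (q : ℤ) * X = Q * x + 1 - i := by
    linear_combination (q : ℤ) * e2 - Q * e1 - (i - 1 : ℤ) * hF
  have m1 := mul_le_mul_of_nonneg_left h1 (show (0 : ℤ) ≤ Q by positivity)
  have m2 := mul_le_mul_of_nonneg_left h2' (show (0 : ℤ) ≤ Q by positivity)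
  refine div_eq_of_scaled_bounds (q := q) ?_ (by linarith)
  linarith

theorem farey_upper_div_eq_of_add_le (hpq : p < q) (hPQ : P < Q) (hp : 0 < p)
    (hF : (p : ℤ) * Q - P * q = 1) {j : ℕ} (hj : q + j ≤ Q) :
    (Q - P + (q + j) * P) / Q = p + (q - p - 1 + j * p) / q := by
  have h1 := Nat.mul_div_le (q - p - 1 + j * p) q
  have h2 := Nat.lt_mul_div_succ (q - p - 1 + j * p) (show 0 < q by omega)
  generalize (q - p - 1 + j * p) / q = h at h1 h2 ⊢
  have e1 : q - p - 1 + j * p + p + 1 = q + j * p := by omega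
  have e2 : Q - P + (q + j) * P + P = Q + (q + j) * P := by omega
  generalize q - p - 1 + j * p = x at *
  generalize Q - P + (q + j) * P = X at *
  have h2' : x + 1 ≤ q * (h + 1) := h2
  zify at hpq hPQ hp hj h1 h2' e1 e2
  have key : (q : ℤ) * X = Q * (x + 1 + q * p) + 1 - q - j := by
    linear_combination (q : ℤ) * e2 - Q * e1 - (q + j - 1 : ℤ) * hF
  have m1 := mul_le_mul_of_nonneg_left h1 (show (0 : ℤ) ≤ Q by positivity)
  have m2 := mul_le_mul_of_nonneg_left h2' (show (0 : ℤ) ≤ Q by positivity)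
  refine div_eq_of_scaled_bounds (q := q) ?_ ?_ <;> push_cast <;> linarith

theorem mechWord_lower_farey (hpq : p < q) (hPQ : P < Q) (hp : 0 < p)
    (hF : (p : ℤ) * Q - P * q = 1) :
    mechWord P Q (Q - P - 1) Q = mechWord p q (q - p - 1) Q := by
  refine List.map_congr_left fun i hi => ?_
  rw [List.mem_range] at hi
  unfold mechLetter
  rw [farey_lower_div_eq hpq hPQ hp hF hi, farey_lower_div_eq hpq hPQ hp hF hi.le]

theorem mechWord_upper_farey (hpq : p < q) (hp : 0 < p) {m : ℕ} (hPQ : P < q + m)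
    (hF : (p : ℤ) * (q + m : ℕ) - P * q = 1) :
    mechWord P (q + m) (q + m - P) (q + m) =
      mechWord p q (q - p) q ++ mechWord p q (q - p - 1) m := by
  rw [mechWord, List.range_add, List.map_append, List.map_map]
  congr 1
  · refine List.map_congr_left fun i hi => ?_
    rw [List.mem_range] at hi
    have hle : q ≤ q + m := Nat.le_add_right _ _
    unfold mechLetter
    rw [farey_upper_div_eq_of_le hpq hPQ hle hp hF hi,
      farey_upper_div_eq_of_le hpq hPQ hle hp hF hi.le]
  · refine List.map_congr_left fun j hj => ?_
    rw [List.mem_range] at hj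
    have hj1 : q + (j + 1) ≤ q + m := by omega
    have hj0 : q + j ≤ q + m := by omega
    simp only [Function.comp, mechLetter]
    rw [add_assoc q j 1, farey_upper_div_eq_of_add_le hpq hPQ hp hF hj1,
      farey_upper_div_eq_of_add_le hpq hPQ hp hF hj0]
    simp

end Farey

theorem periodize_of_lt {w : List Bool} {j : ℕ} (hj : j < w.length) :
    periodize w j = w.getD j false := by
  rw [periodize, Nat.mod_eq_of_lt hj]

theorem getD_flatten_replicate {s : List Bool} {n j : ℕ} (hj : j < n * s.length) :
    (List.replicate n s).flatten.getD j false = periodize s j := by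
  induction n generalizing j with
  | zero => simp at hj
  | succ n ih =>
    rw [List.replicate_succ, List.flatten_cons]
    rcases lt_or_ge j s.length with h | h
    · rw [List.getD_append _ _ _ _ h, periodize_of_lt h]
    · rw [List.getD_append_right _ _ _ _ h, ih (by rw [add_mul] at hj; omega),
        ← periodize_add_length, Nat.sub_add_cancel h]

theorem periodize_replicate_append {s v : List Bool} {n j : ℕ} (hj : j < n * s.length) :
    periodize ((List.replicate n s).flatten ++ v) j = periodize s j := by
  have hlen : (List.replicate n s).flatten.length = n * s.length := by simp
  rw [periodize_of_lt (by rw [List.length_append]; omega), List.getD_append _ _ _ _ (by omega),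
    getD_flatten_replicate hj]

theorem periodize_append_replicate_append {u s v : List Bool} {n j : ℕ}
    (hj : j < u.length + n * s.length) :
    periodize (u ++ (List.replicate n s).flatten ++ v) j = wordThenPeriodic u s j := by
  have hlen : (List.replicate n s).flatten.length = n * s.length := by simp
  rw [periodize_of_lt (by simp only [List.length_append]; omega),
    List.getD_append _ _ _ _ (by rw [List.length_append]; omega), wordThenPeriodic]
  split_ifs with h
  · rw [List.getD_append _ _ _ _ h]
  · rw [List.getD_append_right _ _ _ _ (by omega), getD_flatten_replicate (by omega)]

theorem stmt_14 (p q p0 q0 : ℕ) (hp : 0 < p) (hpq : p < q) (hp0 : p0 < q0)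
    (hfarey : (p : ℤ) * q0 - (p0 : ℤ) * q = 1)
    (s t s0 : List Bool)
    (hs : IsSWord p q s) (ht : IsTWord p q t) (hs0 : IsSWord p0 q0 s0) :
    (∀ n : ℕ, 1 ≤ n → ∀ sn : List Bool, IsSWord (n * p + p0) (n * q + q0) sn →
        sn = (List.replicate n s).flatten ++ s0) ∧
    (∀ n : ℕ, 1 ≤ n → ∀ tn : List Bool, IsTWord (n * p + p0) (n * q + q0) tn →
        tn = t ++ (List.replicate (n - 1) s).flatten ++ s0) ∧
    (∀ j : ℕ, ∃ N : ℕ, ∀ n ≥ N, ∀ sn : List Bool,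
        IsSWord (n * p + p0) (n * q + q0) sn → periodize sn j = periodize s j) ∧
    (∀ j : ℕ, ∃ N : ℕ, ∀ n ≥ N, ∀ tn : List Bool,
        IsTWord (n * p + p0) (n * q + q0) tn →
          periodize tn j = wordThenPeriodic t s j) := by
  have hF : ∀ n : ℕ, (p : ℤ) * (n * q + q0 : ℕ) - (n * p + p0 : ℕ) * q = 1 := fun n => by
    push_cast
    linear_combination hfarey
  have hlt : ∀ n : ℕ, n * p + p0 < n * q + q0 := fun n =>
    add_lt_add_of_le_of_lt (Nat.mul_le_mul_left n hpq.le) hp0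
  have hq : 0 < q := by omega
  have hslen : s.length = q := hs.1
  have htlen : t.length = q := ht.1
  have hs_eq := hs.eq_mechWord hpq
  have ht_eq := ht.eq_mechWord hp hpq
  have hs0_eq := (hs0.eq_mechWord hp0).trans (mechWord_lower_farey hpq hp0 hp hfarey)
  have hS : ∀ n : ℕ, ∀ sn : List Bool, IsSWord (n * p + p0) (n * q + q0) sn →
      sn = (List.replicate n s).flatten ++ s0 := fun n sn hsn => by
    rw [hsn.eq_mechWord (hlt n), mechWord_lower_farey hpq (hlt n) hp (hF n), hs0_eq, hs_eq,
      replicate_append_mechWord _ hq]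
  have hT : ∀ n : ℕ, ∀ tn : List Bool, IsTWord ((n + 1) * p + p0) ((n + 1) * q + q0) tn →
      tn = t ++ (List.replicate n s).flatten ++ s0 := fun n tn htn => by
    have e : (n + 1) * q + q0 = q + (n * q + q0) := by ring
    have hltn := hlt (n + 1)
    have hFn := hF (n + 1)
    rw [e] at htn hltn hFn
    rw [htn.eq_mechWord (by nlinarith) hltn, mechWord_upper_farey hpq hp hltn hFn, ht_eq,
      hs0_eq, hs_eq, List.append_assoc, replicate_append_mechWord _ hq]
  refine ⟨fun n _ => hS n, fun n hn tn htn => ?_, fun j => ⟨j + 1, fun n hn sn hsn => ?_⟩,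
    fun j => ⟨j + 1, fun n hn tn htn => ?_⟩⟩
  · obtain ⟨n, rfl⟩ := Nat.exists_eq_add_of_le' hn
    exact hT n tn htn
  · rw [hS n sn hsn]
    exact periodize_replicate_append (by rw [hslen]; nlinarith)
  · obtain ⟨n, rfl⟩ := Nat.exists_eq_add_of_le' (show 1 ≤ n by omega)
    rw [hT n tn htn]
    exact periodize_append_replicate_append (by rw [hslen, htlen]; nlinarith)
end

section
/- Let r = p/q ∈ ℚ∩(0,1), s = s(r), t = t(r). Every infinite binary word that is a shift of an infinite concatenation of the blocks s and t corresponds under π to a point whose T-orbit is disjoint from the open interval (π(st^∞), π(ts^∞)). -/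
noncomputable def T (x : ℝ) : ℝ := if x ≤ 1/2 then 2*x else 2*x - 1

/-- `π(w) = Σ_j w_j 2^{-j}`. -/
noncomputable def piW (w : ℕ → Bool) : ℝ :=
  ∑' j : ℕ, (if w j then (1:ℝ) else 0) / 2 ^ (j + 1)

/-- `w` is the infinite concatenation `a 0 ++ a 1 ++ a 2 ++ ⋯`. -/
def IsConcat (a : ℕ → List Bool) (w : ℕ → Bool) : Prop :=
  ∀ n : ℕ, ∀ j < (((List.range n).map a).flatten).length,
    (((List.range n).map a).flatten).getD j false = w j

/-- The number of ones among the first `n` letters of `f`. -/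
def onesCount (f : ℕ → Bool) (n : ℕ) : ℤ := ∑ i ∈ Finset.range n, if f i then 1 else 0

theorem onesCount_zero (f : ℕ → Bool) : onesCount f 0 = 0 := by simp [onesCount]

theorem onesCount_succ (f : ℕ → Bool) (n : ℕ) :
    onesCount f (n + 1) = onesCount f n + if f n then 1 else 0 := by
  rw [onesCount, Finset.sum_range_succ, onesCount]

theorem onesCount_succ' (f : ℕ → Bool) (n : ℕ) :
    onesCount f (n + 1) = onesCount (fun i => f (i + 1)) n + if f 0 then 1 else 0 := by
  rw [onesCount, Finset.sum_range_succ', onesCount]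

theorem onesCount_congr {f g : ℕ → Bool} {n : ℕ} (h : ∀ i < n, f i = g i) :
    onesCount f n = onesCount g n :=
  Finset.sum_congr rfl fun i hi => by rw [h i (Finset.mem_range.1 hi)]

theorem onesCount_shift (f : ℕ → Bool) (k n : ℕ) :
    onesCount (fun i => f (k + i)) n = onesCount f (k + n) - onesCount f k := by
  induction n with
  | zero => simp [onesCount_zero]
  | succ n ih => rw [onesCount_succ, ih, ← add_assoc, onesCount_succ]; ring

theorem count_eq_onesCount (u : List Bool) :
    (u.count true : ℤ) = onesCount (fun i => u.getD i false) u.length := by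
  induction u with
  | nil => simp [onesCount_zero]
  | cons b u ih =>
    rw [List.length_cons, onesCount_succ']
    simp only [List.getD_cons_succ, List.getD_cons_zero, ← ih]
    cases b <;> simp

theorem onesCount_periodic {f : ℕ → Bool} {q : ℕ} (hf : ∀ i, f (q + i) = f i) (n : ℕ) :
    onesCount f (n + q) = onesCount f n + onesCount f q := by
  have h := onesCount_shift f q n
  simp only [hf] at h
  rw [add_comm n q]
  linarith

theorem periodize_periodic (w : List Bool) (i : ℕ) :
    periodize w (w.length + i) = periodize w i := by simp [periodize]

theorem onesCount_periodize_length (w : List Bool) :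
    onesCount (periodize w) w.length = w.count true := by
  rw [count_eq_onesCount]
  exact onesCount_congr fun i hi => by rw [periodize, Nat.mod_eq_of_lt hi]

theorem getD_rotate (w : List Bool) (k i : ℕ) (hi : i < w.length) :
    (w.rotate k).getD i false = periodize w (k + i) := by
  have h : 0 < w.length := by omega
  rw [periodize, List.getD_eq_getElem _ _ (by simpa using hi), List.getElem_rotate,
    List.getD_eq_getElem _ _ (Nat.mod_lt _ h)]
  simp only [add_comm]

/-- The number of ones in the cyclic factor of `w` of length `n` at position `a`. -/
def factorCount (w : List Bool) (a n : ℕ) : ℤ :=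
  onesCount (periodize w) (a + n) - onesCount (periodize w) a

theorem count_factor_rotate {w u : List Bool} {k l : ℕ} (hl : l + u.length ≤ w.length)
    (hu : ∀ i < u.length, u.getD i false = (w.rotate k).getD (l + i) false) :
    (u.count true : ℤ) = factorCount w (k + l) u.length := by
  rw [count_eq_onesCount, factorCount, ← onesCount_shift]
  refine onesCount_congr fun i hi => ?_
  rw [hu i hi, getD_rotate _ _ _ (by omega), add_assoc]

theorem IsFactor.exists_position {u w : List Bool} (h : IsFactor u w) :
    ∃ l, l + u.length ≤ w.length ∧ ∀ i < u.length, u.getD i false = w.getD (l + i) false := by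
  obtain ⟨l, r, rfl⟩ := h
  refine ⟨l.length, by simp, fun i hi => ?_⟩
  simp [List.getD_eq_getElem?_getD, List.getElem?_append, hi]

theorem exists_factor (w : List Bool) {l n : ℕ} (h : l + n ≤ w.length) :
    ∃ u, IsFactor u w ∧ u.length = n ∧ ∀ i < n, u.getD i false = w.getD (l + i) false := by
  refine ⟨(w.drop l).take n, ⟨w.take l, (w.drop l).drop n, ?_⟩, ?_, fun i hi => ?_⟩
  · rw [List.append_assoc, List.take_append_drop, List.take_append_drop]
  · simp; omega
  · simp [List.getD_eq_getElem?_getD, hi]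

theorem CyclBalanced.of_factorCount {w : List Bool}
    (h : ∀ a b n, factorCount w a n - factorCount w b n ≤ 1) : CyclBalanced w := by
  intro k u v hu hv huv
  obtain ⟨l, hl, hul⟩ := hu.exists_position
  obtain ⟨m, hm, hvm⟩ := hv.exists_position
  rw [List.length_rotate] at hl hm
  rw [count_factor_rotate hl hul, count_factor_rotate hm hvm, huv]
  exact h _ _ _

theorem CyclBalanced.factorCount_sub_le_of_fit {w : List Bool} (h : CyclBalanced w) {k l m n : ℕ}
    (hl : l + n ≤ w.length) (hm : m + n ≤ w.length) :
    factorCount w (k + l) n - factorCount w (k + m) n ≤ 1 := by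
  obtain ⟨u, hu, rfl, hul⟩ := exists_factor (w.rotate k) (l := l) (n := n) (by simpa using hl)
  obtain ⟨v, hv, hvu, hvm⟩ := exists_factor (w.rotate k) (l := m) (by simpa using hm)
  have := h k u v hu hv hvu.symm
  rwa [count_factor_rotate hl hul, count_factor_rotate (hvu ▸ hm) (hvu ▸ hvm), hvu] at this

theorem factorCount_add_length (w : List Bool) (a n : ℕ) :
    factorCount w (a + w.length) n = factorCount w a n := by
  have h := onesCount_periodic (periodize_periodic w)
  rw [factorCount, factorCount, add_right_comm, h, h]
  ring

theorem factorCount_add_mul_length (w : List Bool) (a n k : ℕ) :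
    factorCount w (a + w.length * k) n = factorCount w a n := by
  induction k with
  | zero => simp
  | succ k ih => rw [Nat.mul_succ, ← add_assoc, factorCount_add_length, ih]

theorem factorCount_compl (w : List Bool) (a : ℕ) {n : ℕ} (hn : n ≤ w.length) :
    factorCount w a n = w.count true - factorCount w (a + n) (w.length - n) := by
  have h := onesCount_periodic (periodize_periodic w) a
  rw [onesCount_periodize_length] at h
  rw [factorCount, factorCount, show a + n + (w.length - n) = a + w.length by omega, h]
  ring

theorem CyclBalanced.abs_factorCount_sub_le_of_short {w : List Bool} (h : CyclBalanced w)
    {a d n : ℕ} (hd : d < w.length) (hn : 2 * n ≤ w.length) :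
    |factorCount w (a + d) n - factorCount w a n| ≤ 1 := by
  rw [abs_le]
  by_cases hdn : d + n ≤ w.length
  · have h1 := h.factorCount_sub_le_of_fit (k := a) hdn (m := 0) (by omega)
    have h2 := h.factorCount_sub_le_of_fit (k := a) (l := 0) (by omega) hdn
    simp only [add_zero] at h1 h2
    constructor <;> linarith
  · have hf : w.length - d + n ≤ w.length := by omega
    have h1 := h.factorCount_sub_le_of_fit (k := a + d) hf (m := 0) (by omega)
    have h2 := h.factorCount_sub_le_of_fit (k := a + d) (l := 0) (by omega) hf
    rw [show a + d + (w.length - d) = a + w.length by omega, factorCount_add_length] at h1 h2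
    simp only [add_zero] at h1 h2
    constructor <;> linarith

theorem CyclBalanced.abs_factorCount_sub_le {w : List Bool} (h : CyclBalanced w)
    {n : ℕ} (a d : ℕ) (hw : 0 < w.length) (hn : n ≤ w.length) :
    |factorCount w (a + d) n - factorCount w a n| ≤ 1 := by
  rw [← Nat.mod_add_div d w.length, ← add_assoc, factorCount_add_mul_length]
  have hd := Nat.mod_lt d hw
  by_cases h2 : 2 * n ≤ w.length
  · exact h.abs_factorCount_sub_le_of_short hd h2
  · rw [factorCount_compl w _ hn, factorCount_compl w a hn, sub_sub_sub_cancel_left, abs_sub_comm,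
      add_right_comm]
    exact h.abs_factorCount_sub_le_of_short hd (by omega)

theorem sum_factorCount (w : List Bool) (a n k : ℕ) :
    ∑ i ∈ Finset.range k, factorCount w (a + i * n) n =
      onesCount (periodize w) (a + k * n) - onesCount (periodize w) a := by
  induction k with
  | zero => simp
  | succ k ih =>
    rw [Finset.sum_range_succ, ih, factorCount, Nat.succ_mul, add_assoc a]
    ring

theorem sum_factorCount_length (w : List Bool) (a n : ℕ) :
    ∑ i ∈ Finset.range w.length, factorCount w (a + i * n) n = n * w.count true := by
  rw [sum_factorCount]
  induction n with
  | zero => simp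
  | succ n ih =>
    rw [Nat.mul_succ, ← add_assoc, onesCount_periodic (periodize_periodic w),
      onesCount_periodize_length]
    push_cast
    linarith

theorem CyclBalanced.factorCount_bounds {w : List Bool} (h : CyclBalanced w)
    {n : ℕ} (a : ℕ) (hw : 0 < w.length) (hn : n ≤ w.length) :
    w.length * factorCount w a n < n * w.count true + w.length ∧
      (n * w.count true : ℤ) < w.length * factorCount w a n + w.length := by
  have hs := sum_factorCount_length w a n
  obtain ⟨k, hk⟩ : ∃ k, w.length = k + 1 := ⟨w.length - 1, by omega⟩
  have hb := fun i => abs_le.1 (h.abs_factorCount_sub_le a (i * n) hw hn)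
  rw [hk, Finset.sum_range_succ'] at hs
  have h1 : ∑ i ∈ Finset.range k, factorCount w (a + (i + 1) * n) n ≤
      ∑ i ∈ Finset.range k, (factorCount w a n + 1) :=
    Finset.sum_le_sum fun i _ => by linarith [(hb (i + 1)).2]
  have h2 : ∑ i ∈ Finset.range k, (factorCount w a n - 1) ≤
      ∑ i ∈ Finset.range k, factorCount w (a + (i + 1) * n) n :=
    Finset.sum_le_sum fun i _ => by linarith [(hb (i + 1)).1]
  simp only [Finset.sum_const, Finset.card_range, nsmul_eq_mul, zero_mul, add_zero] at h1 h2 hs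
  rw [hk]
  push_cast
  constructor <;> linarith

theorem exists_onesCount_lt_of_lex {u v : List Bool} (h : List.Lex (· < ·) u v)
    (hl : u.length = v.length) :
    ∃ n ≤ u.length, onesCount (fun i => u.getD i false) n < onesCount (fun i => v.getD i false) n := by
  induction h with
  | nil => simp at hl
  | @cons b u v _ ih =>
    obtain ⟨n, hn, hlt⟩ := ih (by simpa using hl)
    refine ⟨n + 1, by simpa using hn, ?_⟩
    rw [onesCount_succ', onesCount_succ']
    simpa using hlt
  | @rel b u c v hbc =>
    refine ⟨1, by simp, ?_⟩
    obtain ⟨rfl, rfl⟩ : b = false ∧ c = true := by revert hbc; cases b <;> cases c <;> decide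
    rw [onesCount_succ', onesCount_succ']
    simp [onesCount_zero]

theorem WordLe.eq_of_onesCount_le {u v : List Bool} (h : WordLe u v) (hl : u.length = v.length)
    (hc : ∀ n ≤ u.length,
      onesCount (fun i => v.getD i false) n ≤ onesCount (fun i => u.getD i false) n) : u = v := by
  rcases h with h | h
  · exact h
  · obtain ⟨n, hn, hlt⟩ := exists_onesCount_lt_of_lex h hl
    exact absurd (hc n hn) (not_le.2 hlt)

/-- Prefix counts of the mechanical word of slope `p / q` and intercept `c / q`. -/
def mechCount (p q c n : ℕ) : ℤ := ((n : ℤ) * p + c) / q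

/-- The mechanical word of slope `p / q` and intercept `c / q`. -/
def mech (p q c n : ℕ) : Bool := decide (mechCount p q c n < mechCount p q c (n + 1))

theorem mechCount_bounds {p q : ℕ} (hq : 0 < q) (c n : ℕ) :
    q * mechCount p q c n ≤ n * p + c ∧ (n * p + c : ℤ) < q * mechCount p q c n + q := by
  have hq' : (0 : ℤ) < q := by exact_mod_cast hq
  constructor
  · exact Int.mul_ediv_self_le hq'.ne'
  · exact Int.lt_mul_ediv_self_add hq'

theorem eq_mechCount {p q : ℕ} {c n : ℕ} {x : ℤ} (h1 : q * x ≤ n * p + c)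
    (h2 : (n * p + c : ℤ) < q * x + q) : mechCount p q c n = x := by
  have hq : (0 : ℤ) < q := by linarith
  refine le_antisymm (Int.lt_add_one_iff.1 ?_) ?_
  · exact Int.ediv_lt_of_lt_mul hq (by linarith)
  · exact Int.le_ediv_of_mul_le hq (by linarith)

theorem mechCount_zero {p q c : ℕ} (hc : c < q) : mechCount p q c 0 = 0 :=
  eq_mechCount (by simp) (by simpa using hc)

theorem mechCount_add_period {p q : ℕ} (hq : 0 < q) (c n : ℕ) :
    mechCount p q c (q + n) = p + mechCount p q c n := by
  obtain ⟨h1, h2⟩ := mechCount_bounds (p := p) hq c n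
  refine eq_mechCount ?_ ?_ <;> push_cast <;> linarith

theorem mechCount_succ {p q : ℕ} (hpq : p < q) (c n : ℕ) :
    mechCount p q c (n + 1) = mechCount p q c n + if mech p q c n then 1 else 0 := by
  have hq : 0 < q := by omega
  have hq' : (0 : ℤ) < q := by exact_mod_cast hq
  have hpq' : (p : ℤ) < q := by exact_mod_cast hpq
  obtain ⟨h1, h2⟩ := mechCount_bounds (p := p) hq c n
  obtain ⟨h3, h4⟩ := mechCount_bounds (p := p) hq c (n + 1)
  push_cast at h3 h4
  have h5 : mechCount p q c (n + 1) < mechCount p q c n + 2 :=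
    lt_of_mul_lt_mul_left (a := (q : ℤ)) (by linarith) hq'.le
  have h6 : mechCount p q c n < mechCount p q c (n + 1) + 1 :=
    lt_of_mul_lt_mul_left (a := (q : ℤ)) (by linarith [Int.natCast_nonneg p]) hq'.le
  by_cases h : mechCount p q c n < mechCount p q c (n + 1) <;> simp [mech, h] <;> omega

theorem onesCount_mech {p q c : ℕ} (hpq : p < q) (hc : c < q) (n : ℕ) :
    onesCount (mech p q c) n = mechCount p q c n := by
  induction n with
  | zero => rw [onesCount_zero, mechCount_zero hc]
  | succ n ih => rw [onesCount_succ, ih, mechCount_succ hpq]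

theorem mech_periodic {p q : ℕ} (hq : 0 < q) (c n : ℕ) :
    mech p q c (q + n) = mech p q c n := by
  simp [mech, add_assoc, mechCount_add_period hq]

theorem mech_mod {p q : ℕ} (hq : 0 < q) (c n : ℕ) : mech p q c (n % q) = mech p q c n := by
  have h : Function.Periodic (mech p q c) q := fun n => by rw [add_comm, mech_periodic hq]
  exact h.map_mod_nat n

/-- One period of the mechanical word. -/
def mechList (p q c : ℕ) : List Bool := (List.range q).map (mech p q c)

theorem length_mechList (p q c : ℕ) : (mechList p q c).length = q := by simp [mechList]

theorem getD_mechList {p q c i : ℕ} (hi : i < q) :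
    (mechList p q c).getD i false = mech p q c i := by
  simp [mechList, hi]

theorem periodize_mechList {p q : ℕ} (hq : 0 < q) (c : ℕ) :
    periodize (mechList p q c) = mech p q c := by
  ext i
  rw [periodize, length_mechList, getD_mechList (Nat.mod_lt _ hq), mech_mod hq]

theorem onesCount_mechList {p q c n : ℕ} (hpq : p < q) (hc : c < q) (hn : n ≤ q) :
    onesCount (fun i => (mechList p q c).getD i false) n = mechCount p q c n := by
  rw [← onesCount_mech hpq hc]
  exact onesCount_congr fun i hi => getD_mechList (by omega)

theorem count_mechList {p q c : ℕ} (hpq : p < q) (hc : c < q) :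
    (mechList p q c).count true = p := by
  have h : ((mechList p q c).count true : ℤ) = p := by
    rw [count_eq_onesCount, length_mechList, onesCount_mechList hpq hc le_rfl]
    simpa [mechCount_zero hc] using mechCount_add_period (p := p) (n := 0) (by omega : 0 < q) c
  exact_mod_cast h

theorem cyclBalanced_mechList {p q c : ℕ} (hpq : p < q) (hc : c < q) :
    CyclBalanced (mechList p q c) := by
  have hq : 0 < q := by omega
  refine CyclBalanced.of_factorCount fun a b n => ?_
  simp only [factorCount, periodize_mechList hq, onesCount_mech hpq hc]
  obtain ⟨h1, h2⟩ := mechCount_bounds (p := p) hq c a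
  obtain ⟨h3, h4⟩ := mechCount_bounds (p := p) hq c (a + n)
  obtain ⟨h5, h6⟩ := mechCount_bounds (p := p) hq c b
  obtain ⟨h7, h8⟩ := mechCount_bounds (p := p) hq c (b + n)
  push_cast at h3 h4 h7 h8
  refine Int.lt_add_one_iff.1 (lt_of_mul_lt_mul_left (a := (q : ℤ)) ?_ (Int.natCast_nonneg q))
  linarith

theorem head_mechList {p q c : ℕ} (hq : 0 < q) :
    (mechList p q c).head? = some (mech p q c 0) := by
  obtain ⟨k, rfl⟩ : ∃ k, q = k + 1 := ⟨q - 1, by omega⟩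
  simp [mechList, List.range_succ_eq_map]

theorem onesCount_eq_of_head {w : List Bool} {b : Bool} (hb : w.head? = some b) {n : ℕ}
    (hn : n + 1 ≤ w.length) :
    onesCount (fun i => w.getD i false) (n + 1) = factorCount w 1 n + if b then 1 else 0 := by
  have hw : 0 < w.length := by omega
  have h0 : periodize w 0 = b := by
    obtain ⟨c, u, rfl⟩ := List.exists_cons_of_length_pos hw
    simpa [periodize] using hb
  rw [onesCount_congr (g := periodize w)
    fun i hi => by rw [periodize, Nat.mod_eq_of_lt (by omega)], factorCount, add_comm 1 n,
    onesCount_succ _ 0, h0, onesCount_zero]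
  ring

theorem IsSWord.eq_mechList {p q : ℕ} (hp : 0 < p) (hpq : p < q) {s : List Bool}
    (hs : IsSWord p q s) : s = mechList p q (q - 1 - p) := by
  obtain ⟨hlen, hcount, hbal, hhead, hmax⟩ := hs
  have hq : 0 < q := by omega
  have hc : q - 1 - p < q := by omega
  have hcast : ((q - 1 - p : ℕ) : ℤ) = q - 1 - p := by omega
  have hp' : (0 : ℤ) < p := by exact_mod_cast hp
  have hhead' : mech p q (q - 1 - p) 0 = false := by
    have h := mechCount_succ hpq (q - 1 - p) 0
    rw [mechCount_zero hc, eq_mechCount (x := 0) (by rw [hcast]; push_cast; omega)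
      (by rw [hcast]; push_cast; linarith)] at h
    by_contra hm
    simp [hm] at h
  refine (WordLe.eq_of_onesCount_le (hmax _ (length_mechList ..) (count_mechList hpq hc)
    (cyclBalanced_mechList hpq hc) (by rw [head_mechList hq, hhead'])) ?_ ?_).symm
  · rw [length_mechList, hlen]
  · rw [length_mechList]
    intro n hn
    rw [onesCount_mechList hpq hc hn]
    cases n with
    | zero => rw [onesCount_zero, mechCount_zero hc]
    | succ n =>
      rw [onesCount_eq_of_head hhead (by omega)]
      have h1 := (hbal.factorCount_bounds (n := n) 1 (by omega) (by omega)).1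
      rw [hlen, hcount] at h1
      have h2 := (mechCount_bounds (p := p) hq (q - 1 - p) (n + 1)).2
      rw [hcast] at h2
      push_cast at h2
      simp only [Bool.false_eq_true, if_false, add_zero]
      refine Int.lt_add_one_iff.1 (lt_of_mul_lt_mul_left (a := (q : ℤ)) ?_ (Int.natCast_nonneg q))
      linarith

theorem IsTWord.eq_mechList {p q : ℕ} (hp : 0 < p) (hpq : p < q) {t : List Bool}
    (ht : IsTWord p q t) : t = mechList p q (q - p) := by
  obtain ⟨hlen, hcount, hbal, hhead, hmin⟩ := ht
  have hq : 0 < q := by omega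
  have hc : q - p < q := by omega
  have hcast : ((q - p : ℕ) : ℤ) = q - p := by omega
  have hhead' : mech p q (q - p) 0 = true := by
    have h := mechCount_succ hpq (q - p) 0
    rw [mechCount_zero hc, eq_mechCount (x := 1) (by rw [hcast]; push_cast; linarith)
      (by rw [hcast]; push_cast; omega)] at h
    by_contra hm
    simp [hm] at h
  refine WordLe.eq_of_onesCount_le (hmin _ (length_mechList ..) (count_mechList hpq hc)
    (cyclBalanced_mechList hpq hc) (by rw [head_mechList hq, hhead'])) ?_ ?_
  · rw [length_mechList, hlen]
  · rw [hlen]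
    intro n hn
    rw [onesCount_mechList hpq hc hn]
    cases n with
    | zero => rw [onesCount_zero, mechCount_zero hc]
    | succ n =>
      rw [onesCount_eq_of_head hhead (by omega)]
      have h1 := (hbal.factorCount_bounds (n := n) 1 (by omega) (by omega)).2
      rw [hlen, hcount] at h1
      have h2 := (mechCount_bounds (p := p) hq (q - p) (n + 1)).1
      rw [hcast] at h2
      push_cast at h2
      simp only [if_true]
      refine Int.lt_add_one_iff.1 (lt_of_mul_lt_mul_left (a := (q : ℤ)) ?_ (Int.natCast_nonneg q))
      linarith

/-- Prefix counts of an infinite concatenation of the blocks `s` and `t`. -/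
theorem onesCount_blocks {p q : ℕ} (hp : 0 < p) (hpq : p < q) {f : ℕ → Bool} (b : ℕ → Prop)
    [DecidablePred b]
    (hf : ∀ j, f j = mech p q (if b (j / q) then q - p else q - 1 - p) j) (n : ℕ) :
    onesCount f n = mechCount p q (if b (n / q) then q - p else q - 1 - p) n := by
  have hq : 0 < q := by omega
  induction n with
  | zero => rw [onesCount_zero, mechCount_zero]; split_ifs <;> omega
  | succ n ih =>
    rw [onesCount_succ, ih, hf, ← mechCount_succ hpq]
    by_cases hdvd : q ∣ n + 1
    · obtain ⟨k, hk⟩ := hdvd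
      have key : ∀ c < q, mechCount p q c (n + 1) = k * p := fun c hc => by
        have : (c : ℤ) < q := by exact_mod_cast hc
        rw [hk]
        exact eq_mechCount (by push_cast; linarith [Int.natCast_nonneg c])
          (by push_cast; linarith)
      rw [key _ (by split_ifs <;> omega), key _ (by split_ifs <;> omega)]
    · rw [Nat.succ_div_of_not_dvd hdvd]

theorem mechCount_lower_le_upper {p q : ℕ} (hpq : p < q) (n : ℕ) :
    mechCount p q (q - 1 - p) n ≤ mechCount p q (q - p) n := by
  apply Int.ediv_le_ediv (by omega)
  omega

theorem mechCount_upper_le_lower_add_one {p q : ℕ} (hpq : p < q) (n : ℕ) :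
    mechCount p q (q - p) n ≤ mechCount p q (q - 1 - p) n + 1 := by
  have hq : 0 < q := by omega
  have h1 := (mechCount_bounds (p := p) hq (q - p) n).1
  have h2 := (mechCount_bounds (p := p) hq (q - 1 - p) n).2
  have hcast : ((q - p : ℕ) : ℤ) ≤ (q - 1 - p : ℕ) + q := by omega
  refine Int.lt_add_one_iff.1 (lt_of_mul_lt_mul_left (a := (q : ℤ)) ?_ (Int.natCast_nonneg q))
  linarith

theorem mechCount_lower_one {p q : ℕ} (hpq : p < q) : mechCount p q (q - 1 - p) 1 = 0 :=
  eq_mechCount (by push_cast; omega) (by push_cast; omega)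

theorem mechCount_upper_one {p q : ℕ} (hpq : p < q) : mechCount p q (q - p) 1 = 1 :=
  eq_mechCount (by push_cast; omega) (by push_cast; omega)

theorem mechCount_lower_eq_upper {p q : ℕ} (hpq : p < q) (hco : Nat.Coprime p q)
    {n : ℕ} (hn : 0 < n) (hnq : n < q) :
    mechCount p q (q - 1 - p) (n + 1) = mechCount p q (q - p) (n + 1) := by
  have hq : 0 < q := by omega
  obtain ⟨h1, h2⟩ := mechCount_bounds (p := p) hq (q - p) (n + 1)
  have hcast : ((q - p : ℕ) : ℤ) = q - p := by omega
  have hcast' : ((q - 1 - p : ℕ) : ℤ) = q - 1 - p := by omega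
  have hne : (q : ℤ) * mechCount p q (q - p) (n + 1) ≠ (n + 1 : ℕ) * p + (q - p : ℕ) := by
    intro h
    have hd : (q : ℤ) ∣ ((n * p : ℕ) : ℤ) :=
      ⟨mechCount p q (q - p) (n + 1) - 1, by rw [hcast] at h; push_cast at h ⊢; linarith⟩
    have hd' := hco.symm.dvd_of_dvd_mul_right (Int.natCast_dvd_natCast.1 hd)
    exact absurd (Nat.le_of_dvd hn hd') (by omega)
  exact eq_mechCount (by rw [hcast']; rw [hcast] at h1 hne; omega)
    (by rw [hcast']; rw [hcast] at h2; omega)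

theorem sum_eq_onesCount (f : ℕ → Bool) (N : ℕ) :
    ∑ j ∈ Finset.range N, (if f j then (1 : ℝ) else 0) / 2 ^ (j + 1) =
      onesCount f N / 2 ^ N + ∑ n ∈ Finset.range N, (onesCount f n : ℝ) / 2 ^ (n + 1) := by
  induction N with
  | zero => simp [onesCount_zero]
  | succ N ih =>
    rw [Finset.sum_range_succ, ih, Finset.sum_range_succ, onesCount_succ]
    push_cast
    field_simp
    ring

theorem summable_piW (f : ℕ → Bool) :
    Summable fun j : ℕ => (if f j then (1 : ℝ) else 0) / 2 ^ (j + 1) := by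
  refine Summable.of_nonneg_of_le (fun j => by split_ifs <;> positivity) (fun j => ?_)
    summable_geometric_two
  rw [one_div, inv_pow, ← one_div]
  have h : (2 : ℝ) ^ j ≤ 2 ^ (j + 1) := by rw [pow_succ]; linarith [pow_pos (zero_lt_two' ℝ) j]
  split_ifs
  · exact one_div_le_one_div_of_le (by positivity) h
  · rw [zero_div]; positivity

theorem piW_le_of_onesCount_le {f g : ℕ → Bool} (h : ∀ n, onesCount f n ≤ onesCount g n) :
    piW f ≤ piW g := by
  refine le_of_tendsto_of_tendsto' (summable_piW f).hasSum.tendsto_sum_nat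
    (summable_piW g).hasSum.tendsto_sum_nat fun N => ?_
  rw [sum_eq_onesCount, sum_eq_onesCount]
  gcongr <;> apply h

theorem piW_eq_head_add (f : ℕ → Bool) :
    piW f = (if f 0 then 1 else 0) / 2 + piW (fun j => f (j + 1)) / 2 := by
  rw [piW, (summable_piW f).tsum_eq_zero_add, piW, ← tsum_div_const]
  simp only [zero_add, pow_one, div_div, ← pow_succ]

theorem piW_pos {f : ℕ → Bool} (h : ∃ j, f j = true) : 0 < piW f := by
  obtain ⟨j, hj⟩ := h
  exact (summable_piW f).tsum_pos (fun i => by split_ifs <;> positivity) j (by simp [hj])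

theorem piW_le_one (f : ℕ → Bool) : piW f ≤ 1 := by
  have h : ∀ n, onesCount f n ≤ onesCount (fun _ => true) n := fun n =>
    Finset.sum_le_sum fun i _ => by split_ifs <;> simp_all
  have h1 := piW_eq_head_add fun _ => true
  simp only [if_true] at h1
  linarith [piW_le_of_onesCount_le h]

theorem T_piW {f : ℕ → Bool} (h : ∃ j, f (j + 1) = true) :
    T (piW f) = piW fun j => f (j + 1) := by
  have hpos := piW_pos (f := fun j => f (j + 1)) h
  have hle := piW_le_one fun j => f (j + 1)
  rw [piW_eq_head_add f, T]
  cases f 0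
  · rw [if_pos (by simp; linarith)]; simp; ring
  · rw [if_neg (by simp; linarith)]; simp; ring

theorem T_iterate_piW {f : ℕ → Bool} (h : ∀ m, ∃ j ≥ m, f j = true) (k n : ℕ) :
    T^[n] (piW fun j => f (j + k)) = piW fun j => f (j + (n + k)) := by
  induction n with
  | zero => simp
  | succ n ih =>
    rw [Function.iterate_succ_apply', ih, T_piW]
    · simp only [add_assoc, add_comm, add_left_comm]
    · obtain ⟨j, hj, hfj⟩ := h (1 + (n + k))
      exact ⟨j - (1 + (n + k)), by rw [← hfj]; congr 1; omega⟩

theorem IsConcat.apply_eq {a : ℕ → List Bool} {w : ℕ → Bool} (hw : IsConcat a w) {q : ℕ}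
    (hq : 0 < q) (ha : ∀ i, (a i).length = q) (j : ℕ) :
    w j = (a (j / q)).getD (j % q) false := by
  have hlen : ∀ n, (((List.range n).map a).flatten).length = n * q := fun n => by
    induction n with
    | zero => simp
    | succ n ih => rw [List.range_succ, List.map_append, List.flatten_append, List.length_append, ih]
                   simp [ha, Nat.succ_mul]
  have hj : j < (j / q + 1) * q := by
    rw [mul_comm]; exact Nat.lt_mul_div_succ j hq
  rw [← hw (j / q + 1) j (by rwa [hlen]), List.range_succ, List.map_append, List.flatten_append,
    List.getD_append_right _ _ _ _ (by rw [hlen]; exact Nat.div_mul_le_self j q), hlen]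
  have h : j - j / q * q = j % q := by
    have := Nat.mod_add_div' j q
    omega
  simp [h]

theorem wordThenPeriodic_mechList {p q : ℕ} (hq : 0 < q) (c d j : ℕ) :
    wordThenPeriodic (mechList p q c) (mechList p q d) j =
      mech p q (if j / q = 0 then c else d) j := by
  rw [wordThenPeriodic, length_mechList, periodize_mechList hq]
  by_cases h : j < q
  · rw [if_pos h, if_pos (Nat.div_eq_of_lt h), getD_mechList h]
  · have h0 : j / q ≠ 0 := (Nat.div_pos (by omega) hq).ne'
    rw [if_neg h, if_neg h0, ← mech_periodic hq]
    congr 1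
    omega

theorem onesCount_add_sub_le {p q : ℕ} (hpq : p < q) {x y : ℤ} {m n : ℕ}
    (hx : mechCount p q (q - 1 - p) (m + 1) ≤ x) (hy : y ≤ mechCount p q (q - p) (m + n + 1)) :
    y - x ≤ mechCount p q (q - p) (n + 1) := by
  have hq : 0 < q := by omega
  have h1 := (mechCount_bounds (p := p) hq (q - 1 - p) (m + 1)).2
  have h2 := (mechCount_bounds (p := p) hq (q - p) (m + n + 1)).1
  have h3 := (mechCount_bounds (p := p) hq (q - p) (n + 1)).2
  have hcast : ((q - p : ℕ) : ℤ) = q - p := by omega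
  have hcast' : ((q - 1 - p : ℕ) : ℤ) = q - 1 - p := by omega
  rw [hcast] at h2 h3
  rw [hcast'] at h1
  push_cast at h1 h2 h3
  have : mechCount p q (q - p) (m + n + 1) - mechCount p q (q - 1 - p) (m + 1) ≤
      mechCount p q (q - p) (n + 1) := by
    refine Int.lt_add_one_iff.1 (lt_of_mul_lt_mul_left (a := (q : ℤ)) ?_ (Int.natCast_nonneg q))
    linarith
  linarith

theorem le_onesCount_add_sub {p q : ℕ} (hpq : p < q) {x y : ℤ} {m n : ℕ}
    (hx : x ≤ mechCount p q (q - p) (m + 1)) (hy : mechCount p q (q - 1 - p) (m + n + 1) ≤ y) :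
    mechCount p q (q - 1 - p) (n + 1) ≤ y - x + 1 := by
  have hq : 0 < q := by omega
  have h1 := (mechCount_bounds (p := p) hq (q - p) (m + 1)).1
  have h2 := (mechCount_bounds (p := p) hq (q - 1 - p) (m + n + 1)).2
  have h3 := (mechCount_bounds (p := p) hq (q - 1 - p) (n + 1)).1
  have hcast : ((q - p : ℕ) : ℤ) = q - p := by omega
  have hcast' : ((q - 1 - p : ℕ) : ℤ) = q - 1 - p := by omega
  rw [hcast] at h1
  rw [hcast'] at h2 h3
  push_cast at h1 h2 h3
  have : mechCount p q (q - 1 - p) (n + 1) ≤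
      mechCount p q (q - 1 - p) (m + n + 1) - mechCount p q (q - p) (m + 1) + 1 := by
    refine Int.lt_add_one_iff.1 (lt_of_mul_lt_mul_left (a := (q : ℤ)) ?_ (Int.natCast_nonneg q))
    linarith
  linarith

theorem stmt_16 (p q : ℕ) (hp : 0 < p) (hpq : p < q) (hco : Nat.Coprime p q)
    (s t : List Bool) (hs : IsSWord p q s) (ht : IsTWord p q t)
    (a : ℕ → List Bool) (ha : ∀ i, a i = s ∨ a i = t)
    (w0 : ℕ → Bool) (hw0 : IsConcat a w0) (k : ℕ) :
    ∀ n : ℕ, T^[n] (piW (fun j => w0 (j + k))) ∉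
      Set.Ioo (piW (wordThenPeriodic s t)) (piW (wordThenPeriodic t s)) := by
  classical
  have hq : 0 < q := by omega
  obtain rfl := hs.eq_mechList hp hpq
  obtain rfl := ht.eq_mechList hp hpq
  have hlen : ∀ i, (a i).length = q := fun i => by
    rcases ha i with h | h <;> rw [h, length_mechList]
  have hw : ∀ j, w0 j = mech p q
      (if a (j / q) = mechList p q (q - p) then q - p else q - 1 - p) j := fun j => by
    rw [hw0.apply_eq hq hlen, ← mech_mod hq _ j]
    split_ifs with h
    · rw [h, getD_mechList (Nat.mod_lt _ hq)]
    · rw [(ha _).resolve_right h, getD_mechList (Nat.mod_lt _ hq)]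
  have hcount := onesCount_blocks hp hpq (fun i => a i = mechList p q (q - p)) hw
  have hlower : ∀ n, mechCount p q (q - 1 - p) n ≤ onesCount w0 n := fun n => by
    rw [hcount]
    split_ifs
    exacts [mechCount_lower_le_upper hpq n, le_rfl]
  have hupper : ∀ n, onesCount w0 n ≤ mechCount p q (q - p) n := fun n => by
    rw [hcount]
    split_ifs
    exacts [le_rfl, mechCount_lower_le_upper hpq n]
  have hst := onesCount_blocks (f := wordThenPeriodic (mechList p q (q - 1 - p))
    (mechList p q (q - p))) hp hpq (fun i => ¬ i = 0) fun j => by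
      rw [wordThenPeriodic_mechList hq, ite_not]
  have hts := onesCount_blocks (f := wordThenPeriodic (mechList p q (q - p))
    (mechList p q (q - 1 - p))) hp hpq (fun i => i = 0) fun j => by
      rw [wordThenPeriodic_mechList hq]
  have hones : ∀ m, ∃ j ≥ m, w0 j = true := fun m => by
    by_contra! hcon
    have hconst : ∀ n, onesCount w0 (m + n) = onesCount w0 m := fun n => by
      induction n with
      | zero => rfl
      | succ n ih => rw [← add_assoc, onesCount_succ, ih]; simp [hcon (m + n) (by omega)]
    have h1 := hlower (q + (q + m))
    rw [mechCount_add_period hq, mechCount_add_period hq,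
      show q + (q + m) = m + (q + q) by ring, hconst] at h1
    have h2 := hupper m
    have h3 := mechCount_upper_le_lower_add_one hpq m
    omega
  intro n
  rw [T_iterate_piW hones]
  set m := n + k
  have hshift := fun l => onesCount_shift w0 m l
  simp only [add_comm m] at hshift
  rintro ⟨hgt, hlt⟩
  cases h0 : w0 m
  · refine absurd (piW_le_of_onesCount_le fun l => ?_) (not_le.2 hgt)
    have hm : onesCount w0 (m + 1) = onesCount w0 m := by simp [onesCount_succ, h0]
    rw [hshift, hst]
    rcases l with _ | l
    · rw [mechCount_zero (by split_ifs <;> omega)]; simp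
    have hle := onesCount_add_sub_le hpq (hlower (m + 1)) (hupper (m + l + 1))
    rw [hm, add_comm m l, add_right_comm] at hle
    split_ifs with h
    · rw [Nat.div_eq_zero_iff_lt hq] at h
      rcases Nat.eq_zero_or_pos l with rfl | hl
      · rw [zero_add, mechCount_lower_one hpq, add_comm 1 m, hm, sub_self]
      · rwa [mechCount_lower_eq_upper hpq hco hl (by omega)]
    · exact hle
  · refine absurd (piW_le_of_onesCount_le fun l => ?_) (not_le.2 hlt)
    have hm : onesCount w0 (m + 1) = onesCount w0 m + 1 := by simp [onesCount_succ, h0]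
    rw [hshift, hts]
    rcases l with _ | l
    · rw [mechCount_zero (by split_ifs <;> omega)]; simp
    have hle := le_onesCount_add_sub hpq (hupper (m + 1)) (hlower (m + l + 1))
    rw [hm, add_comm m l, add_right_comm] at hle
    split_ifs with h
    · rw [Nat.div_eq_zero_iff_lt hq] at h
      rcases Nat.eq_zero_or_pos l with rfl | hl
      · rw [zero_add, mechCount_upper_one hpq, add_comm 1 m, hm]
        linarith
      · rw [← mechCount_lower_eq_upper hpq hco hl (by omega)]
        linarith
    · linarith
end
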